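/- arXiv:cs/0701113 — 2 statements merged into one kernel-verified Lean document; each statement's English description precedes it below -/
import Mathlib

section
/- For every complete linear ordering α, every finite semigroup (S,·), and every additive labelling σ from α to S, there exists a ramseyan split for (α,σ) of height at most 3|S|. -/
/-- An additive labelling from a linear ordering to a semigroup. -/
def IsAdditive {α S : Type*} [LinearOrder α] [Semigroup S] (σ : α → α → S) : Prop :=
  ∀ x y z : α, x < y → y < z → σ x y * σ y z = σ x z

/-- `x` and `y` are `k`-neighbours for the split `s`. -/
def KNeighbours {α : Type*} [LinearOrder α] (s : α → ℕ) (k : ℕ) (x y : α) : Prop :=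
  s x = k ∧ s y = k ∧ ∀ z, min x y ≤ z → z ≤ max x y → k ≤ s z

/-- A split `s` is ramseyan for the additive labelling `σ`. -/
def IsRamseyanSplit {α S : Type*} [LinearOrder α] [Semigroup S]
    (σ : α → α → S) (s : α → ℕ) : Prop :=
  ∀ k : ℕ, ∀ x y x' y' : α, x < y → x' < y' →
    (∀ a ∈ ({x, y, x', y'} : Set α), ∀ b ∈ ({x, y, x', y'} : Set α), KNeighbours s k a b) →
    σ x y = σ x' y' ∧ σ x y * σ x y = σ x y

/-!
Adjoin a unit to the semigroup and induct on the set of labels in use, which may be taken to be a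
union of `J`-classes. Let `J` be a maximal `J`-class of labels and `B` a maximal set of points no
two of which span a label in `J`. The points of `B` are split by induction, and every point of a gap
of `B` spans a label in `J` with the point of `B` next to the gap on the left or on the right.
When that point is `b`, on the left, all labels among such points of the gap lie in `J`, and by
Green's lemma a point `x` is given one of `|J|` colours encoding `σ b x` and the `R`-class common to
all `σ x y`. Points of equal colour then form a homogeneous set. Each of the two sides thus costs
`|J|` new levels, and one last level serves for the set of at most one point left in the end.
-/

/-- `a` is a factor of `b`, that is `b ≤ a` in Green's `J`-preorder. In a noncommutative monoid
`a ∣ b` only means `b ∈ a * M`, so that `∣` is Green's `R`-preorder, in the same orientation. -/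
def IsFactor {M : Type*} [Monoid M] (a b : M) : Prop :=
  ∃ u v, u * a * v = b

/-- The `J`-class of `m`: the elements that are two-sided multiples and factors of `m`. -/
def jClass {M : Type*} [Monoid M] (m : M) : Set M :=
  {a | AntisymmRel IsFactor m a}

/-- All increasing pairs of points of `P` carry the same, idempotent, label. -/
def IsHomogeneousOn {α S : Type*} [LinearOrder α] [Mul S] (σ : α → α → S) (P : Set α) : Prop :=
  ∀ ⦃x⦄, x ∈ P → ∀ ⦃y⦄, y ∈ P → ∀ ⦃x'⦄, x' ∈ P → ∀ ⦃y'⦄, y' ∈ P → x < y → x' < y' →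
    σ x y = σ x' y' ∧ IsIdempotentElem (σ x y)

/-- The labelling of the reversed order, with values in the opposite semigroup. -/
def dualLabelling {α S : Type*} (σ : α → α → S) : αᵒᵈ → αᵒᵈ → Sᵐᵒᵖ :=
  fun x y => MulOpposite.op (σ (OrderDual.ofDual y) (OrderDual.ofDual x))

/-- `P` lies in a single gap of `B`: no point of `B` is squeezed between points of `P`. Taking both
points equal, `P` is disjoint from `B`. -/
def LiesInGap {α : Type*} [LinearOrder α] (B P : Set α) : Prop :=
  ∀ ⦃x⦄, x ∈ P → ∀ ⦃y⦄, y ∈ P → Disjoint (Set.Icc x y) B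

/-- `x < y` are linked at level `m` when `σ x y` is a factor of `m`. This is used for an `m` that is
maximal in Green's `J`-preorder among the labels, where it says that `σ x y` lies in `jClass m`. -/
def Linked {α M : Type*} [LinearOrder α] [Monoid M] (σ : α → α → M) (m : M) (x y : α) : Prop :=
  x < y ∧ IsFactor (σ x y) m

section RightDivisibility

variable {S : Type*} [Semigroup S] {a b g : S}

theorem mul_eq_self_of_rightDvd (hab : a ∣ᵣ b) (hag : a * g = a) : b * g = b := by
  obtain ⟨u, rfl⟩ := hab
  rw [mul_assoc, hag]

theorem eq_of_mul_eq_mul_of_rightDvd {p x y : S} (hpa : p * a ∣ᵣ a) (hx : a ∣ x) (hy : a ∣ y)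
    (hxy : p * x = p * y) : x = y := by
  obtain ⟨u, hu⟩ := hpa
  obtain ⟨w, rfl⟩ := hx
  obtain ⟨w', rfl⟩ := hy
  calc a * w = u * (p * (a * w)) := by rw [← mul_assoc p, ← mul_assoc, ← hu]
    _ = u * (p * (a * w')) := by rw [hxy]
    _ = a * w' := by rw [← mul_assoc p, ← mul_assoc, ← hu]

end RightDivisibility

section Factors

variable {M : Type*} [Monoid M] {a b m : M}

theorem isFactor_of_dvd (h : a ∣ b) : IsFactor a b := by
  obtain ⟨w, rfl⟩ := h
  exact ⟨1, w, by rw [one_mul]⟩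

theorem isFactor_mul_left (a b : M) : IsFactor b (a * b) :=
  ⟨a, 1, mul_one _⟩

instance : IsPreorder M IsFactor where
  refl a := isFactor_of_dvd (dvd_refl a)
  trans := by
    rintro a _ _ ⟨u, v, rfl⟩ ⟨u', v', rfl⟩
    exact ⟨u' * u, v * v', by simp only [mul_assoc]⟩

theorem IsFactor.trans {a b c : M} (h : IsFactor a b) (h' : IsFactor b c) : IsFactor a c :=
  _root_.trans h h'

theorem isFactor_op_iff : IsFactor (MulOpposite.op a) (MulOpposite.op b) ↔ IsFactor a b := by
  constructor
  · rintro ⟨u, v, h⟩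
    exact ⟨v.unop, u.unop, by simpa [mul_assoc] using congrArg MulOpposite.unop h⟩
  · rintro ⟨u, v, rfl⟩
    exact ⟨MulOpposite.op v, MulOpposite.op u, by simp [mul_assoc]⟩

theorem op_mem_jClass_iff : MulOpposite.op a ∈ jClass (MulOpposite.op m) ↔ a ∈ jClass m :=
  and_congr isFactor_op_iff isFactor_op_iff

theorem jClass_eq_of_mem (ha : a ∈ jClass m) : jClass a = jClass m :=
  Set.ext fun _ => ⟨fun hb => AntisymmRel.trans ha hb,
    fun hb => AntisymmRel.trans (AntisymmRel.symm ha) hb⟩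

theorem mem_jClass_of_antisymmRel_dvd (ha : a ∈ jClass m) (h : AntisymmRel (· ∣ ·) a b) :
    b ∈ jClass m :=
  AntisymmRel.trans ha ⟨isFactor_of_dvd h.1, isFactor_of_dvd h.2⟩

theorem exists_isFactor_minimal [Finite M] {T : Set M} (hT : T.Nonempty) :
    ∃ m ∈ T, ∀ a ∈ T, IsFactor a m → IsFactor m a := by
  obtain ⟨m, hm, hmin⟩ :=
    exists_minimalFor_of_wellFoundedLT (· ∈ T) (fun a => {x | IsFactor x a}) hT
  exact ⟨m, hm, fun a ha ham => hmin ha (fun _ hx => hx.trans ham) (refl_of IsFactor m)⟩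

end Factors

section Stability

variable {M : Type*} [Monoid M] [Finite M] {a b g g' : M}

-- If `a = u * b * v`, then `u * ·` maps `b * M` onto a superset of `a * M`, which already
-- contains `b * M`; by finiteness the two are equal.
theorem IsFactor.dvd_of_dvd (h : IsFactor b a) (hab : a ∣ b) : b ∣ a := by
  obtain ⟨u, v, rfl⟩ := h
  have hsub : {x | b ∣ x} ⊆ {x | u * b * v ∣ x} := fun _ hx => hab.trans hx
  have himage : {x | u * b * v ∣ x} ⊆ (u * ·) '' {x | b ∣ x} := by
    rintro _ ⟨w, rfl⟩
    exact ⟨b * (v * w), dvd_mul_right _ _, by simp only [mul_assoc]⟩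
  have hcard := (Set.ncard_le_ncard himage).trans Set.ncard_image_le
  exact (Set.eq_of_subset_of_ncard_le hsub hcard).ge (dvd_refl (u * b * v))

theorem IsFactor.rightDvd_of_rightDvd (h : IsFactor b a) (hab : a ∣ᵣ b) : b ∣ᵣ a := by
  have := Finite.of_equiv M MulOpposite.opEquiv
  rw [rightDvd_iff_op_dvd_op] at hab ⊢
  exact (isFactor_op_iff.mpr h).dvd_of_dvd hab

theorem isIdempotentElem_of_mul_eq_self (hag : a * g = a) (h : IsFactor a g) :
    IsIdempotentElem g :=
  mul_eq_self_of_rightDvd (h.rightDvd_of_rightDvd ⟨a, hag.symm⟩) hag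

theorem eq_of_mul_eq_self (hag : a * g = a) (hag' : a * g' = a) (h : IsFactor a g)
    (hdvd : g ∣ g') : g = g' := by
  have hright : g * g' = g := mul_eq_self_of_rightDvd (h.rightDvd_of_rightDvd ⟨a, hag.symm⟩) hag'
  obtain ⟨w, rfl⟩ := hdvd
  calc g = g * (g * w) := hright.symm
    _ = g * w := by rw [← mul_assoc, (isIdempotentElem_of_mul_eq_self hag h).eq]

theorem exists_mul_antisymmRel_dvd (h : AntisymmRel IsFactor a b) :
    ∃ p, AntisymmRel (· ∣ ·) (p * a) b ∧ p * a ∣ᵣ a := by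
  obtain ⟨p, v, rfl⟩ := h.1
  have hdvd : p * a ∣ p * a * v := dvd_mul_right _ _
  have hfactor : IsFactor (p * a) a := (isFactor_of_dvd hdvd).trans h.2
  exact ⟨p, ⟨hdvd, (h.2.trans (isFactor_mul_left p a)).dvd_of_dvd hdvd⟩,
    hfactor.rightDvd_of_rightDvd ⟨p, rfl⟩⟩

-- Left multiplication by some `p` depending only on the `R`-class of `r` maps the `R`-class of
-- `a` injectively into that of `r` (Green's lemma). Hence the `J`-class of `a` has enough elements
-- to code the pairs of one of its `R`-classes and an element of the `R`-class of `a`.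
theorem exists_jClass_code (a : M) :
    ∃ code : M → M → M, ∀ ⦃r x⦄, r ∈ jClass a → AntisymmRel (· ∣ ·) a x →
      code r x ∈ jClass a ∧ ∀ ⦃r' x'⦄, r' ∈ jClass a → AntisymmRel (· ∣ ·) a x' →
        code r x = code r' x' → AntisymmRel (· ∣ ·) r r' ∧ x = x' := by
  have : IsPreorder M (· ∣ ·) := { }
  have hexists (s : M) : ∃ p, s ∈ jClass a → AntisymmRel (· ∣ ·) (p * a) s ∧ p * a ∣ᵣ a := by
    by_cases hs : s ∈ jClass a
    · exact (exists_mul_antisymmRel_dvd hs).imp fun _ h _ => h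
    · exact ⟨1, fun h => absurd h hs⟩
  choose p hp using hexists
  let rep (r : M) : M := ofAntisymmetrization (· ∣ ·) (toAntisymmetrization (· ∣ ·) r)
  have hrep (r : M) : AntisymmRel (· ∣ ·) (rep r) r :=
    Quotient.exact (toAntisymmetrization_ofAntisymmetrization (· ∣ ·) _)
  have hrep_mem {r : M} (hr : r ∈ jClass a) : rep r ∈ jClass a :=
    mem_jClass_of_antisymmRel_dvd hr (hrep r).symm
  have hcode {r x : M} (hr : r ∈ jClass a) (hx : AntisymmRel (· ∣ ·) a x) :
      AntisymmRel (· ∣ ·) (p (rep r) * x) r :=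
    AntisymmRel.trans ⟨mul_dvd_mul_left _ hx.2, mul_dvd_mul_left _ hx.1⟩
      ((hp _ (hrep_mem hr)).1.trans (hrep r))
  refine ⟨fun r x => p (rep r) * x, fun r x hr hx =>
    ⟨mem_jClass_of_antisymmRel_dvd hr (hcode hr hx).symm, ?_⟩⟩
  intro r' x' hr' hx' (heq : p (rep r) * x = p (rep r') * x')
  have hrr' : AntisymmRel (· ∣ ·) r r' := by
    have := hcode hr hx
    rw [heq] at this
    exact this.symm.trans (hcode hr' hx')
  have hrep_eq : rep r = rep r' := congrArg (ofAntisymmetrization _) (Quotient.sound hrr')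
  rw [← hrep_eq] at heq
  exact ⟨hrr', eq_of_mul_eq_mul_of_rightDvd (hp _ (hrep_mem hr)).2 hx.1 hx'.1 heq⟩

theorem antisymmRel_dvd_of_forall_lt {ι : Type*} [LinearOrder ι] {m : M} {f : ι → M}
    (hf : ∀ i, f i ∈ jClass m) (hdvd : ∀ i j, i < j → f i ∣ f j) (i j : ι) :
    AntisymmRel (· ∣ ·) (f i) (f j) := by
  wlog hij : i ≤ j generalizing i j
  · exact (this j i (le_of_not_ge hij)).symm
  rcases hij.eq_or_lt with rfl | hlt
  · exact ⟨dvd_rfl, dvd_rfl⟩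
  · have hfactor : IsFactor (f j) (f i) := (hf j).2.trans (hf i).1
    exact ⟨hdvd i j hlt, hfactor.dvd_of_dvd (hdvd i j hlt)⟩

end Stability

section Labellings

variable {α S : Type*} [LinearOrder α] {σ : α → α → S}

theorem IsHomogeneousOn.mono [Mul S] {P Q : Set α} (h : IsHomogeneousOn σ Q) (hPQ : P ⊆ Q) :
    IsHomogeneousOn σ P :=
  fun _ hx _ hy _ hx' _ hy' => h (hPQ hx) (hPQ hy) (hPQ hx') (hPQ hy')

theorem isHomogeneousOn_image_coe [Mul S] {B : Set α} {P : Set B} :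
    IsHomogeneousOn σ ((↑) '' P) ↔ IsHomogeneousOn (fun x y : B => σ x y) P := by
  simp only [IsHomogeneousOn, Set.forall_mem_image, Subtype.coe_lt_coe]

theorem LiesInGap.notMem {B P : Set α} (h : LiesInGap B P) {x : α} (hx : x ∈ P) : x ∉ B :=
  Set.disjoint_left.mp (h hx hx) ⟨le_rfl, le_rfl⟩

theorem LiesInGap.lt_of_lt {B P : Set α} (h : LiesInGap B P) {b x y : α} (hb : b ∈ B)
    (hx : x ∈ P) (hy : y ∈ P) (hby : b < y) : b < x :=
  lt_of_not_ge fun hxb => Set.disjoint_left.mp (h hx hy) ⟨hxb, hby.le⟩ hb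

theorem LiesInGap.preimage_ofDual {B P : Set α} (h : LiesInGap B P) :
    LiesInGap (OrderDual.ofDual ⁻¹' B) (OrderDual.ofDual ⁻¹' P) :=
  fun _ hx _ hy => Set.disjoint_left.mpr fun _ hz => Set.disjoint_left.mp (h hy hx) hz.symm

variable [Semigroup S]

theorem isRamseyanSplit_iff {s : α → ℕ} :
    IsRamseyanSplit σ s ↔
      ∀ k (P : Set α), (∀ x ∈ P, ∀ y ∈ P, KNeighbours s k x y) → IsHomogeneousOn σ P := by
  refine ⟨fun hs k P hP x hx y hy x' hx' y' hy' hxy hxy' => hs k x y x' y' hxy hxy' ?_,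
    fun hs k x y x' y' hxy hxy' h => hs k _ h (by simp) (by simp) (by simp) (by simp) hxy hxy'⟩
  have hsub : {x, y, x', y'} ⊆ P := by simp [Set.insert_subset_iff, *]
  exact fun a ha b hb => hP a (hsub ha) b (hsub hb)

theorem IsAdditive.dvd (hσ : IsAdditive σ) {x y z : α} (hxy : x < y) (hyz : y < z) :
    σ x y ∣ σ x z :=
  ⟨σ y z, (hσ x y z hxy hyz).symm⟩

theorem IsAdditive.dualLabelling (hσ : IsAdditive σ) : IsAdditive (dualLabelling σ) :=
  fun _ _ _ hxy hyz => congrArg MulOpposite.op (hσ _ _ _ hyz hxy)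

theorem IsHomogeneousOn.of_dualLabelling {P : Set α}
    (h : IsHomogeneousOn (dualLabelling σ) (OrderDual.ofDual ⁻¹' P)) : IsHomogeneousOn σ P := by
  intro x hx y hy x' hx' y' hy' hxy hxy'
  obtain ⟨heq, hidem⟩ := @h (.toDual y) hy (.toDual x) hx (.toDual y') hy' (.toDual x') hx' hxy hxy'
  exact ⟨congrArg MulOpposite.unop heq, congrArg MulOpposite.unop hidem⟩

theorem isRamseyanSplit_of_gaps {s : α → ℕ} {B : Set α} {n : ℕ} (hsn : ∀ x, s x ≤ n ↔ x ∈ B)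
    (hB : IsRamseyanSplit (fun x y : B => σ x y) fun x => s x)
    (hgaps : ∀ (P : Set α) k, LiesInGap B P → (∀ x ∈ P, s x = k) → IsHomogeneousOn σ P) :
    IsRamseyanSplit σ s := by
  refine isRamseyanSplit_iff.mpr fun k P hP => ?_
  have hsk : ∀ x ∈ P, s x = k := fun x hx => (hP x hx x hx).1
  by_cases hk : k ≤ n
  · have hPB : P ⊆ B := fun x hx => (hsn x).mp (hsk x hx ▸ hk)
    have hhom := isRamseyanSplit_iff.mp hB k (((↑) : B → α) ⁻¹' P) fun x hx y hy =>
      ⟨hsk x hx, hsk y hy, fun z => (hP x hx y hy).2.2 z⟩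
    rwa [← isHomogeneousOn_image_coe, Subtype.image_preimage_coe,
      Set.inter_eq_right.mpr hPB] at hhom
  · refine hgaps P k (fun x hx y hy => Set.disjoint_left.mpr fun z hz hzB => hk ?_) hsk
    have hkz : k ≤ s z := (hP x hx y hy).2.2 z (inf_le_left.trans hz.1) (hz.2.trans le_sup_right)
    exact hkz.trans ((hsn z).mpr hzB)

theorem exists_split_of_colouring {C : Type*} [Finite C] {B : Set α} {t : B → ℕ} {n : ℕ}
    (htn : ∀ x, 1 ≤ t x ∧ t x ≤ n) (ht : IsRamseyanSplit (fun x y : B => σ x y) t) (c : α → C)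
    (hc : ∀ (P : Set α) i, LiesInGap B P → (∀ x ∈ P, c x = i) → IsHomogeneousOn σ P) :
    ∃ s : α → ℕ, (∀ x, 1 ≤ s x ∧ s x ≤ n + Nat.card C) ∧ IsRamseyanSplit σ s := by
  classical
  let e := Finite.equivFin C
  let s (x : α) : ℕ := if hx : x ∈ B then t ⟨x, hx⟩ else n + 1 + e (c x)
  have hs_mem (x : B) : s x = t x := dif_pos x.2
  have hs_notMem {x : α} (hx : x ∉ B) : s x = n + 1 + e (c x) := dif_neg hx
  have hs_bounds (x : α) : 1 ≤ s x ∧ s x ≤ n + Nat.card C ∧ (s x ≤ n ↔ x ∈ B) := by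
    by_cases hx : x ∈ B
    · have := htn ⟨x, hx⟩
      simp only [hs_mem ⟨x, hx⟩, hx, iff_true]
      lia
    · simp only [hs_notMem hx, hx, iff_false]
      lia
  refine ⟨s, fun x => ⟨(hs_bounds x).1, (hs_bounds x).2.1⟩,
    isRamseyanSplit_of_gaps (fun x => (hs_bounds x).2.2) ?_ fun P k hgap hsk => ?_⟩
  · simpa only [hs_mem] using ht
  rcases P.eq_empty_or_nonempty with rfl | ⟨x, hx⟩
  · simp [IsHomogeneousOn]
  refine hc P (c x) hgap fun y hy => ?_
  have hxy := (hsk y hy).trans (hsk x hx).symm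
  rw [hs_notMem (hgap.notMem hy), hs_notMem (hgap.notMem hx)] at hxy
  exact e.injective (Fin.ext (by lia))

end Labellings

section Links

variable {α M : Type*} [LinearOrder α] [Monoid M] {σ : α → α → M} {m : M} {B : Set α}

theorem linked_dualLabelling_iff {x y : αᵒᵈ} :
    Linked (dualLabelling σ) (MulOpposite.op m) x y ↔
      Linked σ m (OrderDual.ofDual y) (OrderDual.ofDual x) :=
  and_congr Iff.rfl isFactor_op_iff

theorem Linked.of_lt (hσ : IsAdditive σ) {x y z : α} (hxz : Linked σ m x z) (hxy : x < y)
    (hyz : y < z) : Linked σ m x y ∧ Linked σ m y z := by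
  have hmul := hσ x y z hxy hyz
  exact ⟨⟨hxy, (isFactor_of_dvd (hσ.dvd hxy hyz)).trans hxz.2⟩,
    hyz, (hmul ▸ isFactor_mul_left (σ x y) (σ y z)).trans hxz.2⟩

theorem exists_maximal_not_linked (σ : α → α → M) (m : M) :
    ∃ B : Set α, (∀ x ∈ B, ∀ y ∈ B, ¬ Linked σ m x y) ∧
      ∀ x ∉ B, (∃ b ∈ B, Linked σ m b x) ∨ ∃ b ∈ B, Linked σ m x b := by
  let r (x y : α) : Prop := x < y ∧ ¬ Linked σ m x y
  obtain ⟨hchain, hmax⟩ := maxChain_spec (r := r)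
  refine ⟨maxChain r, fun x hx y hy hxy => ?_, fun x hx => ?_⟩
  · rcases hchain hx hy hxy.1.ne with h | h
    · exact h.2 hxy
    · exact h.1.asymm hxy.1
  · by_contra! ⟨hleft, hright⟩
    have hinsert : IsChain r (insert x (maxChain r)) := hchain.insert fun b hb hxb =>
      (lt_or_gt_of_ne hxb).imp (⟨·, hright b hb⟩) (⟨·, hleft b hb⟩)
    exact hx (hmax hinsert (Set.subset_insert _ _) ▸ Set.mem_insert _ _)

variable [Finite M]

theorem exists_antisymmRel_dvd_of_gt (hσ : IsAdditive σ) (hm : ∀ x y, x < y → σ x y ∈ jClass m)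
    (x : α) : ∃ r ∈ jClass m, ∀ y, x < y → AntisymmRel (· ∣ ·) (σ x y) r := by
  by_cases hx : ∃ y, x < y
  · obtain ⟨y, hxy⟩ := hx
    exact ⟨σ x y, hm x y hxy, fun z hxz =>
      antisymmRel_dvd_of_forall_lt (f := fun z : Set.Ioi x => σ x z) (fun z => hm x z z.2)
        (fun u _ huv => hσ.dvd u.2 huv) ⟨z, hxz⟩ ⟨y, hxy⟩⟩
  · exact ⟨m, refl_of (AntisymmRel IsFactor) m, fun y hxy => absurd ⟨y, hxy⟩ hx⟩

-- The colour of `x` codes `a x` together with the common `R`-class of the labels `σ x y`, `x < y`.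
-- Between points of the same colour `a x * σ x y = a x`, and among the solutions `g` of
-- `a x * g = a x` in the `J`-class each `R`-class contains at most one, which is idempotent.
theorem exists_homogeneous_colouring (hσ : IsAdditive σ) (hm : ∀ x y, x < y → σ x y ∈ jClass m)
    {a : α → M} (ha : ∀ x, a x ∈ jClass m) (hmul : ∀ x y, x < y → a x * σ x y = a y) :
    ∃ c : α → jClass m, ∀ i, IsHomogeneousOn σ (c ⁻¹' {i}) := by
  rcases isEmpty_or_nonempty α with hα | ⟨⟨o⟩⟩
  · exact ⟨isEmptyElim, fun _ x => isEmptyElim x⟩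
  choose r hr hrσ using exists_antisymmRel_dvd_of_gt hσ hm
  obtain ⟨code, hcode⟩ := exists_jClass_code (a o)
  rw [jClass_eq_of_mem (ha o)] at hcode
  have hR (x : α) : AntisymmRel (· ∣ ·) (a o) (a x) :=
    antisymmRel_dvd_of_forall_lt ha (fun x y hxy => ⟨σ x y, (hmul x y hxy).symm⟩) o x
  let c (x : α) : jClass m := ⟨code (r x) (a x), (hcode (hr x) (hR x)).1⟩
  have hc {x y : α} (hxy : c x = c y) : AntisymmRel (· ∣ ·) (r x) (r y) ∧ a x = a y :=
    (hcode (hr x) (hR x)).2 (hr y) (hR y) (congrArg Subtype.val hxy)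
  refine ⟨c, fun i x hx y hy x' hx' y' hy' hxy hxy' => ?_⟩
  obtain ⟨-, ha_xy⟩ := hc (hx.trans hy.symm)
  obtain ⟨hr_xx', ha_xx'⟩ := hc (hx.trans hx'.symm)
  obtain ⟨-, ha_xy'⟩ := hc (hx.trans hy'.symm)
  have hfix : a x * σ x y = a x := (hmul x y hxy).trans ha_xy.symm
  have hfix' : a x * σ x' y' = a x := by rw [ha_xx', hmul x' y' hxy', ← ha_xy', ha_xx']
  have hfactor : IsFactor (a x) (σ x y) := (ha x).2.trans (hm x y hxy).1
  have hdvd : σ x y ∣ σ x' y' :=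
    ((hrσ x y hxy).1.trans hr_xx'.1).trans (hrσ x' y' hxy').2
  exact ⟨eq_of_mul_eq_self hfix hfix' hfactor hdvd, isIdempotentElem_of_mul_eq_self hfix hfactor⟩

theorem exists_colouring_of_linked_right (hσ : IsAdditive σ)
    (hm : ∀ x y, Linked σ m x y → σ x y ∈ jClass m) (b : α) :
    ∃ c : α → jClass m, ∀ i, IsHomogeneousOn σ {x | Linked σ m b x ∧ c x = i} := by
  let P : Set α := {x | Linked σ m b x}
  have hP (x y : P) (hxy : x < y) : σ x y ∈ jClass m :=
    hm _ _ (y.2.of_lt hσ x.2.1 hxy).2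
  obtain ⟨c, hc⟩ := exists_homogeneous_colouring (σ := fun x y : P => σ x y) (a := fun x => σ b x)
    (fun x y z => hσ x y z) hP (fun x => hm b x x.2) (fun x y => hσ b x y x.2.1)
  let c' : α → jClass m :=
    Function.extend Subtype.val c fun _ => ⟨m, refl_of (AntisymmRel IsFactor) m⟩
  refine ⟨c', fun i => (isHomogeneousOn_image_coe.mpr (hc i)).mono ?_⟩
  rintro x ⟨hx, hxi⟩
  exact ⟨⟨x, hx⟩, (Subtype.val_injective.extend_apply c _ ⟨x, hx⟩).symm.trans hxi, rfl⟩

-- Inside a gap of `B` all points are linked to the same point `b` of `B` on their left: the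
-- next point of `B` on the left of the gap.
theorem exists_colouring_of_linked_left_mem (hσ : IsAdditive σ)
    (hm : ∀ x y, Linked σ m x y → σ x y ∈ jClass m)
    (hB : ∀ x ∈ B, ∀ y ∈ B, ¬ Linked σ m x y) :
    ∃ c : α → jClass m, ∀ (P : Set α) i, LiesInGap B P → (∀ x ∈ P, c x = i) →
      (∀ x ∈ P, ∃ b ∈ B, Linked σ m b x) → IsHomogeneousOn σ P := by
  have hlink (x : α) : ∃ l, (∃ b ∈ B, Linked σ m b x) → l ∈ B ∧ Linked σ m l x := by
    by_cases h : ∃ b ∈ B, Linked σ m b x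
    · exact h.imp fun _ hb _ => hb
    · exact ⟨x, fun h' => absurd h' h⟩
  choose l hl using hlink
  choose c hc using exists_colouring_of_linked_right hσ hm
  refine ⟨fun x => c (l x) x, fun P i hgap hi hP => ?_⟩
  have hle {x y : α} (hx : x ∈ P) (hy : y ∈ P) : l x ≤ l y := by
    obtain ⟨hlx, hlinkx⟩ := hl x (hP x hx)
    obtain ⟨hly, hlinky⟩ := hl y (hP y hy)
    by_contra! hlt
    exact hB _ hly _ hlx (hlinky.of_lt hσ hlt (hgap.lt_of_lt hlx hy hx hlinkx.1)).1
  rcases P.eq_empty_or_nonempty with rfl | ⟨x, hx⟩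
  · simp [IsHomogeneousOn]
  refine (hc (l x) i).mono fun y hy => ?_
  rw [(hle hx hy).antisymm (hle hy hx)]
  exact ⟨(hl y (hP y hy)).2, hi y hy⟩

theorem exists_colouring_of_linked_right_mem (hσ : IsAdditive σ)
    (hm : ∀ x y, Linked σ m x y → σ x y ∈ jClass m)
    (hB : ∀ x ∈ B, ∀ y ∈ B, ¬ Linked σ m x y) :
    ∃ c : α → jClass m, ∀ (P : Set α) i, LiesInGap B P → (∀ x ∈ P, c x = i) →
      (∀ x ∈ P, ∃ b ∈ B, Linked σ m x b) → IsHomogeneousOn σ P := by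
  have := Finite.of_equiv M MulOpposite.opEquiv
  obtain ⟨c, hc⟩ := exists_colouring_of_linked_left_mem (B := OrderDual.ofDual ⁻¹' B)
    (m := MulOpposite.op m) hσ.dualLabelling
    (fun x y hxy => op_mem_jClass_iff.mpr (hm _ _ (linked_dualLabelling_iff.mp hxy)))
    (fun x hx y hy hxy => hB _ hy _ hx (linked_dualLabelling_iff.mp hxy))
  refine ⟨fun x => ⟨(c (.toDual x) : Mᵐᵒᵖ).unop, op_mem_jClass_iff.mp (c (.toDual x)).2⟩,
    fun P i hgap hi hP => .of_dualLabelling ?_⟩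
  refine hc _ ⟨.op i, op_mem_jClass_iff.mpr i.2⟩ hgap.preimage_ofDual (fun x hx => ?_)
    fun x hx => ?_
  · exact Subtype.ext (congrArg (fun j : jClass m => MulOpposite.op (j : M)) (hi _ hx))
  · obtain ⟨b, hb, hxb⟩ := hP _ hx
    exact ⟨.toDual b, hb, linked_dualLabelling_iff.mpr hxb⟩

theorem exists_colouring_of_gaps (hσ : IsAdditive σ)
    (hm : ∀ x y, Linked σ m x y → σ x y ∈ jClass m)
    (hB : ∀ x ∈ B, ∀ y ∈ B, ¬ Linked σ m x y)
    (hlink : ∀ x ∉ B, (∃ b ∈ B, Linked σ m b x) ∨ ∃ b ∈ B, Linked σ m x b) :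
    ∃ c : α → jClass m ⊕ jClass m, ∀ (P : Set α) i, LiesInGap B P → (∀ x ∈ P, c x = i) →
      IsHomogeneousOn σ P := by
  classical
  obtain ⟨cl, hcl⟩ := exists_colouring_of_linked_left_mem hσ hm hB
  obtain ⟨cr, hcr⟩ := exists_colouring_of_linked_right_mem hσ hm hB
  refine ⟨fun x => if ∃ b ∈ B, Linked σ m b x then .inl (cl x) else .inr (cr x), ?_⟩
  rintro P (i | i) hgap hi
  · have hi' : ∀ x ∈ P, (∃ b ∈ B, Linked σ m b x) ∧ cl x = i := by
      simpa [ite_eq_iff] using hi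
    exact hcl P i hgap (fun x hx => (hi' x hx).2) fun x hx => (hi' x hx).1
  · have hi' : ∀ x ∈ P, (¬ ∃ b ∈ B, Linked σ m b x) ∧ cr x = i := by
      simpa [ite_eq_iff] using hi
    exact hcr P i hgap (fun x hx => (hi' x hx).2) fun x hx =>
      (hlink x (hgap.notMem hx)).resolve_left (hi' x hx).1

end Links

theorem exists_split_of_jClass_subset {M : Type*} [Monoid M] [Finite M] (T : Set M)
    (hT : ∀ a ∈ T, jClass a ⊆ T) {α : Type*} [LinearOrder α] {σ : α → α → M} (hσ : IsAdditive σ)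
    (hσT : ∀ x y, x < y → σ x y ∈ T) :
    ∃ s : α → ℕ, (∀ x, 1 ≤ s x ∧ s x ≤ 2 * T.ncard + 1) ∧ IsRamseyanSplit σ s := by
  induction T using WellFoundedLT.induction generalizing α with
  | ind T ih =>
  rcases T.eq_empty_or_nonempty with rfl | hne
  · exact ⟨1, by simp, fun _ x y _ _ hxy => absurd (hσT x y hxy) (Set.notMem_empty _)⟩
  obtain ⟨m, hmT, hmin⟩ := exists_isFactor_minimal hne
  have hm_self : m ∈ jClass m := refl_of (AntisymmRel IsFactor) m
  have hm (x y : α) (hxy : Linked σ m x y) : σ x y ∈ jClass m :=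
    ⟨hmin _ (hσT x y hxy.1) hxy.2, hxy.2⟩
  obtain ⟨B, hB, hlink⟩ := exists_maximal_not_linked σ m
  have hT' : ∀ a ∈ T \ jClass m, jClass a ⊆ T \ jClass m := fun a ha b hb =>
    ⟨hT a ha.1 hb, fun hbm => ha.2 (AntisymmRel.trans hbm (AntisymmRel.symm hb))⟩
  obtain ⟨t, htn, ht⟩ := ih (T \ jClass m) ((hT m hmT).sdiff_ssubset_of_nonempty ⟨m, hm_self⟩) hT'
    (σ := fun x y : B => σ x y) (fun x y z => hσ x y z)
    fun x y hxy => ⟨hσT x y hxy, fun h => hB x x.2 y y.2 ⟨hxy, h.2⟩⟩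
  obtain ⟨c, hc⟩ := exists_colouring_of_gaps hσ hm hB hlink
  obtain ⟨s, hsn, hs⟩ := exists_split_of_colouring htn ht c hc
  have hcard : (T \ jClass m).ncard + (jClass m).ncard = T.ncard :=
    Set.ncard_sdiff_add_ncard_of_subset (hT m hmT)
  refine ⟨s, fun x => ⟨(hsn x).1, (hsn x).2.trans ?_⟩, hs⟩
  rw [Nat.card_sum, Nat.card_coe_set_eq]
  lia

section WithOne

variable {S : Type*} [Semigroup S]

theorem jClass_coe_subset_range (a : S) :
    jClass (a : WithOne S) ⊆ Set.range ((↑) : S → WithOne S) := by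
  rintro _ ⟨⟨u, v, rfl⟩, -⟩
  cases u <;> cases v
  case one.one => exact ⟨a, by simp⟩
  case one.coe v => exact ⟨a * v, by simp⟩
  case coe.one u => exact ⟨u * a, by simp⟩
  case coe.coe u v => exact ⟨u * a * v, by simp⟩

end WithOne

theorem factorisation_split_complete_general {α S : Type*} [LinearOrder α] [Semigroup S] [Finite S]
    (σ : α → α → S) (hσ : IsAdditive σ) :
    ∃ s : α → ℕ, (∀ x, 1 ≤ s x ∧ s x ≤ 2 * Nat.card S + 1) ∧ IsRamseyanSplit σ s := by
  have : Finite (WithOne S) := inferInstanceAs (Finite (Option S))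
  have hσ' : IsAdditive fun x y => (σ x y : WithOne S) := fun x y z hxy hyz => by
    rw [← WithOne.coe_mul, hσ x y z hxy hyz]
  obtain ⟨s, hsn, hs⟩ := exists_split_of_jClass_subset (Set.range ((↑) : S → WithOne S))
    (by rintro _ ⟨a, rfl⟩; exact jClass_coe_subset_range a) hσ' fun x y _ => ⟨σ x y, rfl⟩
  rw [Set.ncard_range_of_injective WithOne.coe_injective] at hsn
  refine ⟨s, hsn, fun k x y x' y' hxy hxy' h => ?_⟩
  simpa only [← WithOne.coe_mul, WithOne.coe_inj] using hs k x y x' y' hxy hxy' h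

theorem factorisation_split_complete {α S : Type*} [LinearOrder α]
    (hSup : ∀ t : Set α, t.Nonempty → BddAbove t → ∃ l, IsLUB t l)
    (hInf : ∀ t : Set α, t.Nonempty → BddBelow t → ∃ l, IsGLB t l)
    [Semigroup S] [Fintype S] (σ : α → α → S) (hσ : IsAdditive σ) :
    ∃ s : α → ℕ, (∀ x, 1 ≤ s x ∧ s x ≤ 3 * Fintype.card S) ∧ IsRamseyanSplit σ s := by
  obtain ⟨s, hsn, hs⟩ := factorisation_split_complete_general σ hσ
  refine ⟨s, fun x => ⟨(hsn x).1, (hsn x).2.trans ?_⟩, hs⟩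
  have : 0 < Fintype.card S := Fintype.card_pos_iff.mpr ⟨σ x x⟩
  rw [Nat.card_eq_fintype_card]
  lia
end

section
/- For every alphabet A, finite semigroup (S,·), semigroup morphism φ : A⁺ → S, and nonempty word u ∈ A⁺, the word u has a ramseyan factorisation tree (for φ) of height at most 3|S|. -/
/-- Ordered unranked trees whose leaves are labelled by letters of `A`. -/
inductive FTree (A : Type) : Type
  | leaf (a : A)
  | node (children : List (FTree A))

namespace FTree

/-- The word obtained by reading the leaves from left to right. -/
def yield {A : Type} : FTree A → List A
  | .leaf a => [a]
  | .node ts => (ts.attach.map (fun t => yield t.1)).flatten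
decreasing_by simp only [FTree.node.sizeOf_spec]; have := List.sizeOf_lt_of_mem t.2; omega

/-- The height of a factorisation tree; a single leaf has height `0`. -/
def height {A : Type} : FTree A → ℕ
  | .leaf _ => 0
  | .node ts => (ts.attach.map (fun t => height t.1)).foldr max 0 + 1
decreasing_by simp only [FTree.node.sizeOf_spec]; have := List.sizeOf_lt_of_mem t.2; omega

/-- A factorisation tree is ramseyan for `φ` if every node is a leaf, or has
two children, or all its children's yields are mapped by `φ` to a common
idempotent. -/
inductive Ramseyan {A S : Type} [Semigroup S] (φ : List A → S) : FTree A → Prop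
  | leaf (a : A) : Ramseyan φ (.leaf a)
  | node (ts : List (FTree A)) (hsub : ∀ t ∈ ts, Ramseyan φ t)
      (hcond : ts.length = 2 ∨ ∃ e : S, e * e = e ∧ ∀ t ∈ ts, φ (yield t) = e) :
      Ramseyan φ (.node ts)

end FTree

/-!
The word is written `v ++ [x]`, and the induction is on the number of elements of `S` above `φ v` in
Green's `𝒥`-preorder. Cut `v` greedily into blocks, closing a block as soon as its value falls to
the `𝒥`-class of `φ v`; a block without its last letter is then strictly higher, so the induction
hypothesis provides a tree for each block.

All products of consecutive blocks lie in a single `𝒥`-class `J`. In the monoid with an adjoined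
identity, a cut between blocks thus determines the pair `(p, q)`, where `p` is the value of the
prefix before the cut and `q` is that of the suffix after it, multiplied on the right by a fixed
element that makes `p * q` the same idempotent at all cuts. Two cuts with the same pair have
between them a factor of value `q * p`, an idempotent. By Green's lemma these pairs can be coloured
injectively by the elements of `J`. Grouping the cuts of one colour costs one idempotent node and
two binary nodes to attach both ends, hence three levels per element of `J`.
-/

section GreenRelations

variable {M : Type*} [Monoid M]

/-- Green's `𝒥`-preorder on a monoid: `a` is below `b` if it lies in the two-sided ideal generated
by `b`. Being `𝒥`-equivalent is `AntisymmRel JLE`. -/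
def JLE (a b : M) : Prop := ∃ x y, a = x * b * y

instance : IsPreorder M JLE where
  refl a := ⟨1, 1, by simp⟩
  trans := by
    rintro _ _ c ⟨x, y, rfl⟩ ⟨z, w, rfl⟩
    exact ⟨x * z, w * y, by simp only [mul_assoc]⟩

theorem mul_jle_left (a b : M) : JLE (a * b) a := ⟨1, b, by simp⟩

theorem mul_jle_right (a b : M) : JLE (a * b) b := ⟨a, 1, by simp⟩

theorem exists_pow_succ_mul_eq [Finite M] {a x y : M} (h : x * a * y = a) :
    ∃ n, x ^ (n + 1) * a = a := by
  have hpow (n : ℕ) : x ^ n * a * y ^ n = a := by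
    induction n with
    | zero => simp
    | succ n ih =>
      calc x ^ (n + 1) * a * y ^ (n + 1) = x ^ n * (x * a * y) * y ^ n := by
            simp only [pow_succ x, pow_succ' y, mul_assoc]
        _ = a := by rw [h, ih]
  obtain ⟨i, j, hij, hx⟩ :=
    Set.finite_univ.exists_lt_map_eq_of_forall_mem (f := (x ^ · : ℕ → M)) (fun _ ↦ Set.mem_univ _)
  obtain ⟨d, rfl⟩ := Nat.exists_eq_add_of_lt hij
  refine ⟨d, ?_⟩
  calc x ^ (d + 1) * a = x ^ (d + 1) * (x ^ i * a * y ^ i) := by rw [hpow]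
    _ = x ^ (i + d + 1) * a * y ^ i := by
      rw [add_assoc, add_comm i, pow_add _ (d + 1)]
      simp only [mul_assoc]
    _ = a := by rw [← hx, hpow]

theorem exists_mul_pow_succ_eq [Finite M] {a x y : M} (h : x * a * y = a) :
    ∃ n, a * y ^ (n + 1) = a := by
  have : Finite Mᵐᵒᵖ := .of_equiv M MulOpposite.opEquiv
  have h' : MulOpposite.op y * MulOpposite.op a * MulOpposite.op x = MulOpposite.op a := by
    rw [← MulOpposite.op_mul, ← MulOpposite.op_mul, ← mul_assoc, h]
  obtain ⟨n, hn⟩ := exists_pow_succ_mul_eq h'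
  exact ⟨n, MulOpposite.op_injective hn⟩

theorem exists_mul_mul_eq_of_jle_mul_left [Finite M] {a x : M} (h : JLE a (x * a)) :
    ∃ y, y * (x * a) = a := by
  obtain ⟨u, v, h⟩ := h
  obtain ⟨n, hn⟩ := exists_pow_succ_mul_eq (a := a) (x := u * x) (y := v) (by
    simpa only [mul_assoc] using h.symm)
  exact ⟨(u * x) ^ n * u, by simpa only [pow_succ, mul_assoc] using hn⟩

theorem exists_mul_mul_eq_of_jle_mul_right [Finite M] {a x : M} (h : JLE a (a * x)) :
    ∃ y, a * x * y = a := by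
  obtain ⟨u, v, h⟩ := h
  obtain ⟨n, hn⟩ := exists_mul_pow_succ_eq (a := a) (x := u) (y := x * v) (by
    simpa only [mul_assoc] using h.symm)
  exact ⟨v * (x * v) ^ n, by simpa only [pow_succ', mul_assoc] using hn⟩

theorem exists_mul_mul_eq_self_of_jle_mul [Finite M] {a b : M} (ha : JLE a (a * b))
    (hb : JLE b (a * b)) : ∃ z, a * z * a = a := by
  obtain ⟨s, hs⟩ := exists_mul_mul_eq_of_jle_mul_right ha
  rw [mul_assoc] at hs
  have hbs : JLE (b * s) (a * (b * s)) := calc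
    JLE (b * s) b := mul_jle_left b s
    JLE _ (a * b) := hb
    JLE _ a := mul_jle_left a b
    _ = a * (b * s) := hs.symm
  obtain ⟨z, hz⟩ := exists_mul_mul_eq_of_jle_mul_left hbs
  rw [hs] at hz
  exact ⟨z, by rw [mul_assoc, hz, hs]⟩

end GreenRelations

section InversePairs

variable {M : Type*} [Monoid M] {E p q : M}

/-- `p` and `q` are semigroup inverses of each other, `p * q * p = p` and `q * p * q = q`, with
`p * q = E`. The two inverse laws are encoded as `E` being a left identity of `p` and a right
identity of `q`. -/
structure InversePair (E p q : M) : Prop where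
  mul_eq : p * q = E
  mul_left : E * p = p
  mul_right : q * E = q

namespace InversePair

theorem isIdempotentElem_mul (h : InversePair E p q) : IsIdempotentElem (q * p) := by
  rw [IsIdempotentElem, mul_assoc, ← mul_assoc p, h.mul_eq, h.mul_left]

theorem mul_jle (h : InversePair E p q) : JLE (q * p) E := by
  rw [← h.mul_left, ← mul_assoc]
  exact _root_.trans (mul_jle_left _ p) (mul_jle_right q E)

theorem comp {p' q' : M} (h : InversePair E p q) (h' : InversePair E p' q') :
    InversePair (q' * p') (q' * p) (q * p') where
  mul_eq := by rw [mul_assoc, ← mul_assoc p, h.mul_eq, h'.mul_left]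
  mul_left := by rw [mul_assoc, ← mul_assoc p', h'.mul_eq, h.mul_left]
  mul_right := by rw [mul_assoc, ← mul_assoc p', h'.mul_eq, h'.mul_left]

theorem idempotent_unique {e e' c d d' : M} (h : InversePair e c d) (hs : InversePair e d c)
    (h' : InversePair e' c d') (hs' : InversePair e' d' c) : e = e' := calc
  e = d * (c * e') := by rw [hs'.mul_right, hs.mul_eq]
  _ = e * c * d' := by rw [← mul_assoc, hs.mul_eq, mul_assoc e, h'.mul_eq]
  _ = e' := by rw [h.mul_left, h'.mul_eq]

theorem exists_representatives (E : M) :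
    ∃ P Q : M → M, ∀ p q, InversePair E p q →
      InversePair E (P (q * p)) (Q (q * p)) ∧ Q (q * p) * P (q * p) = q * p := by
  have hex (e : M) : ∃ P Q, ∀ p q, InversePair E p q → q * p = e →
      InversePair E P Q ∧ Q * P = e := by
    by_cases he : ∃ p q, InversePair E p q ∧ q * p = e
    · obtain ⟨P, Q, hPQ⟩ := he
      exact ⟨P, Q, fun _ _ _ _ ↦ hPQ⟩
    · exact ⟨1, 1, fun p q hpq hqp ↦ absurd ⟨p, q, hpq, hqp⟩ he⟩
  choose P Q hPQ using hex
  exact ⟨P, Q, fun p q h ↦ hPQ _ p q h rfl⟩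

/- With `(P e, Q e)` the representative for `e = q * p`, the colour `Q e * p` of `(p, q)` lies in
the maximal subgroup around `e`, with inverse `q * P e`; hence it determines `e`, and then
`p = P e * (Q e * p)`. -/
theorem exists_injective_colour (E : M) :
    ∃ κ : M → M → M, (∀ p q, InversePair E p q → AntisymmRel JLE (κ p q) E) ∧
      ∀ p q p' q', InversePair E p q → InversePair E p' q' → κ p q = κ p' q' →
        p = p' ∧ q = q' := by
  obtain ⟨P, Q, hPQ⟩ := exists_representatives E
  have mul_colour {p q : M} (h : InversePair E p q) : P (q * p) * (Q (q * p) * p) = p := by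
    rw [← mul_assoc, (hPQ p q h).1.mul_eq, h.mul_left]
  refine ⟨fun p q ↦ Q (q * p) * p, fun p q h ↦ ⟨?_, ?_⟩, fun p q p' q' h h' hκ ↦ ?_⟩
  · calc JLE (Q (q * p) * p) p := mul_jle_right _ p
      _ = E * p := h.mul_left.symm
      JLE _ E := mul_jle_left E p
  · calc E = p * q := h.mul_eq.symm
      JLE _ p := mul_jle_left p q
      _ = P (q * p) * (Q (q * p) * p) := (mul_colour h).symm
      JLE _ (Q (q * p) * p) := mul_jle_right _ _
  · have group {p q : M} (h : InversePair E p q) :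
        InversePair (q * p) (Q (q * p) * p) (q * P (q * p)) ∧
          InversePair (q * p) (q * P (q * p)) (Q (q * p) * p) := by
      obtain ⟨hr, hre⟩ := hPQ p q h
      exact ⟨by simpa only [hre] using h.comp hr, hr.comp h⟩
    dsimp only at hκ
    have he : q * p = q' * p' :=
      idempotent_unique (group h).1 (group h).2 (hκ ▸ (group h').1) (hκ ▸ (group h').2)
    have hp : p = p' := by rw [← mul_colour h, ← mul_colour h', hκ, he]
    refine ⟨hp, ?_⟩
    calc q = q * p * q' := by rw [mul_assoc, hp, h'.mul_eq, h.mul_right]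
      _ = q' := by rw [he, mul_assoc, h'.mul_eq, h'.mul_right]

end InversePair

end InversePairs

section Colouring

variable {M : Type*} [Monoid M] [Finite M] {n : ℕ} {σ : ℕ → ℕ → M}

theorem InversePair.eq_mul_of_mul_eq {E p q q' s : M} (h : InversePair E p q) (hp : p * s = p)
    (hq : s * q' = q) (hs : JLE s E) : s = q * p := by
  have hsq : JLE s (s * q') := calc
    JLE s E := hs
    _ = p * q := h.mul_eq.symm
    JLE _ q := mul_jle_right p q
    _ = s * q' := hq.symm
  obtain ⟨y, hy⟩ := exists_mul_mul_eq_of_jle_mul_right hsq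
  calc s = q * E * y := by rw [h.mul_right, ← hq, hy]
    _ = q * p * (q * y) := by rw [← h.mul_eq]; simp only [mul_assoc]
    _ = q * p := by rw [← hq, hy, mul_assoc, hp]

theorem exists_inversePairs {a : M} (hn : 2 ≤ n)
    (hσ : ∀ i j k, i ≤ j → j ≤ k → k ≤ n → σ i j * σ j k = σ i k)
    (ha : ∀ i j, i < j → j ≤ n → AntisymmRel JLE (σ i j) a) :
    ∃ (E : M) (p q : ℕ → M), AntisymmRel JLE E a ∧
      (∀ i, 0 < i → i ≤ n → InversePair E (p i) (q i)) ∧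
      ∀ i j, i ≤ j → j ≤ n → p i * σ i j = p j ∧ σ i j * q j = q i := by
  have jle_mul {x y : ℕ} (hx : x < y) (hy : y ≤ n) {z w : ℕ} (hz : z < w) (hw : w ≤ n) :
      JLE (σ x y) (σ z w) := _root_.trans (ha x y hx hy).1 (ha z w hz hw).2
  obtain ⟨z, hz⟩ : ∃ z, σ 0 1 * z * σ 0 1 = σ 0 1 := by
    apply exists_mul_mul_eq_self_of_jle_mul (b := σ 1 2) <;>
      rw [hσ 0 1 2 zero_le_one one_le_two hn]
    exacts [jle_mul one_pos (by omega) two_pos hn, jle_mul one_lt_two hn two_pos hn]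
  obtain ⟨w, hw⟩ : ∃ w, σ 0 n * w = σ 0 1 := by
    rw [← hσ 0 1 n zero_le_one (by omega) le_rfl]
    apply exists_mul_mul_eq_of_jle_mul_right
    rw [hσ 0 1 n zero_le_one (by omega) le_rfl]
    exact jle_mul one_pos (by omega) (by omega) le_rfl
  set E := σ 0 1 * z with hE
  have hEE : E * E = E := by rw [hE, ← mul_assoc, hz]
  refine ⟨E, σ 0, fun i ↦ σ i n * (w * z * E), ⟨?_, ?_⟩, fun i hi hin ↦ ⟨?_, ?_, ?_⟩,
    fun i j hij hjn ↦ ⟨hσ 0 i j i.zero_le hij hjn, ?_⟩⟩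
  · exact _root_.trans (mul_jle_left _ z) (ha 0 1 one_pos (by omega)).1
  · calc JLE a (σ 0 1) := (ha 0 1 one_pos (by omega)).2
      _ = E * σ 0 1 := hz.symm
      JLE _ E := mul_jle_left E _
  · calc σ 0 i * (σ i n * (w * z * E)) = σ 0 i * σ i n * w * z * E := by simp only [mul_assoc]
      _ = E := by rw [hσ 0 i n i.zero_le hin le_rfl, hw, ← hE, hEE]
  · rw [← hσ 0 1 i zero_le_one hi hin, ← mul_assoc, hz]
  · simp only [mul_assoc, hEE]
  · rw [← mul_assoc, hσ i j n hij hjn le_rfl]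

theorem exists_homogeneous_colouring_s3 {a : M} (hn : 2 ≤ n)
    (hσ : ∀ i j k, i ≤ j → j ≤ k → k ≤ n → σ i j * σ j k = σ i k)
    (ha : ∀ i j, i < j → j ≤ n → AntisymmRel JLE (σ i j) a) :
    ∃ τ : ℕ → M, ∀ i, 0 < i → i ≤ n → AntisymmRel JLE (τ i) a ∧
      ∃ e, JLE e a ∧ IsIdempotentElem e ∧
        ∀ j k, 0 < j → j < k → k ≤ n → τ j = τ i → τ k = τ i → σ j k = e := by
  obtain ⟨E, p, q, hE, hpq, hmul⟩ := exists_inversePairs hn hσ ha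
  obtain ⟨κ, hκE, hκ⟩ := InversePair.exists_injective_colour E
  refine ⟨fun i ↦ κ (p i) (q i), fun i hi hin ↦ ⟨(hκE _ _ (hpq i hi hin)).trans hE,
    q i * p i, _root_.trans (hpq i hi hin).mul_jle hE.1, (hpq i hi hin).isIdempotentElem_mul,
    fun j k hj hjk hkn hji hki ↦ ?_⟩⟩
  have pair_eq {l : ℕ} (hl : 0 < l) (hln : l ≤ n) (hli : κ (p l) (q l) = κ (p i) (q i)) :
      p l = p i ∧ q l = q i := hκ _ _ _ _ (hpq l hl hln) (hpq i hi hin) hli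
  obtain ⟨hpj, hqj⟩ := pair_eq hj (hjk.le.trans hkn) hji
  obtain ⟨hpk, -⟩ := pair_eq (hj.trans hjk) hkn hki
  obtain ⟨hp, hq⟩ := hmul j k hjk.le hkn
  exact (hpq i hi hin).eq_mul_of_mul_eq (by rw [← hpj, hp, hpk, hpj]) (hq.trans hqj)
    (_root_.trans (ha j k hjk hkn).1 hE.2)

end Colouring

namespace FTree

variable {A : Type}

theorem yield_leaf (a : A) : (leaf a).yield = [a] := by rw [yield]

theorem yield_node (ts : List (FTree A)) : (node ts).yield = (ts.map yield).flatten := by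
  rw [yield, List.attach_map_val]

theorem height_leaf (a : A) : (leaf a).height = 0 := by rw [height]

theorem height_node_le {ts : List (FTree A)} {h : ℕ} (hts : ∀ t ∈ ts, t.height ≤ h) :
    (node ts).height ≤ h + 1 := by
  rw [height, List.attach_map_val]
  refine Nat.succ_le_succ (List.max_le_of_forall_le (ts.map height) h ?_)
  simpa using hts

end FTree

section RamseyanTrees

variable {A S : Type} [Semigroup S] {φ : List A → S} {h h' : ℕ} {v w : List A}

/-- The word `w` has a ramseyan factorisation tree for `φ` of height at most `h`. -/
def HasRamseyanTree (φ : List A → S) (h : ℕ) (w : List A) : Prop :=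
  ∃ t : FTree A, t.yield = w ∧ FTree.Ramseyan φ t ∧ t.height ≤ h

namespace HasRamseyanTree

theorem mono (hw : HasRamseyanTree φ h w) (hh : h ≤ h') : HasRamseyanTree φ h' w := by
  obtain ⟨t, hyield, hram, hheight⟩ := hw
  exact ⟨t, hyield, hram, hheight.trans hh⟩

theorem singleton (x : A) : HasRamseyanTree φ h [x] :=
  ⟨.leaf x, FTree.yield_leaf x, .leaf x, by simp [FTree.height_leaf]⟩

theorem append (hv : HasRamseyanTree φ h v) (hw : HasRamseyanTree φ h w) :
    HasRamseyanTree φ (h + 1) (v ++ w) := by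
  obtain ⟨s, rfl, hs, hsh⟩ := hv
  obtain ⟨t, rfl, ht, hth⟩ := hw
  exact ⟨.node [s, t], by simp [FTree.yield_node], .node _ (by simp [hs, ht]) (.inl rfl),
    FTree.height_node_le (by simp [hsh, hth])⟩

theorem flatten {ws : List (List A)} {e : S} (he : IsIdempotentElem e)
    (hws : ∀ w ∈ ws, HasRamseyanTree φ h w ∧ φ w = e) :
    HasRamseyanTree φ (h + 1) ws.flatten := by
  have : Nonempty (FTree A) := ⟨.node []⟩
  choose! t hyield hram hheight using fun w hw ↦ (hws w hw).1
  refine ⟨.node (ws.map t), ?_, .node _ (by simpa using hram) (.inr ⟨e, he, ?_⟩),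
    FTree.height_node_le (by simpa using hheight)⟩
  · have hmap : ws.map (FTree.yield ∘ t) = ws := (List.map_congr_left hyield).trans ws.map_id
    rw [FTree.yield_node, List.map_map, hmap]
  · intro s hs
    obtain ⟨w, hw, rfl⟩ := List.mem_map.1 hs
    rw [hyield w hw, (hws w hw).2]

end HasRamseyanTree

end RamseyanTrees

section Factors

variable {A : Type*} {ws : List (List A)} {i j k : ℕ}

/-- The concatenation of the words of `ws` with indices in `[i, j)`. -/
def factor (ws : List (List A)) (i j : ℕ) : List A := ((ws.take j).drop i).flatten

theorem factor_self (ws : List (List A)) (i : ℕ) : factor ws i i = [] := by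
  simp [factor]

theorem factor_append (hij : i ≤ j) (hjk : j ≤ k) :
    factor ws i j ++ factor ws j k = factor ws i k := by
  obtain ⟨d, rfl⟩ := Nat.exists_eq_add_of_le hij
  obtain ⟨d', rfl⟩ := Nat.exists_eq_add_of_le hjk
  simp only [factor, List.drop_take, ← List.flatten_append]
  congr 1
  rw [show i + d + d' - i = d + d' by omega, show i + d - i = d by omega, List.take_add,
    List.drop_drop, show i + d + d' - (i + d) = d' by omega]

theorem factor_succ (hi : i < ws.length) : factor ws i (i + 1) = ws[i] := by
  simp [factor, List.drop_take, List.take_one_drop_eq_of_lt_length hi]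

theorem factor_zero_length (ws : List (List A)) : factor ws 0 ws.length = ws.flatten := by
  simp [factor]

theorem factor_append_of_le_length (us : List (List A)) (hj : j ≤ ws.length) :
    factor (ws ++ us) i j = factor ws i j := by
  rw [factor, List.take_append_of_le_length hj, factor]

theorem factor_infix_flatten (ws : List (List A)) (i j : ℕ) : factor ws i j <:+: ws.flatten :=
  ((List.drop_suffix i _).isInfix.trans (List.take_prefix j ws).isInfix).flatten

/-- Cut greedily: a block is closed as soon as it satisfies `Q`. -/
theorem exists_minimal_blocks (Q : List A → Prop) (hnil : ¬Q []) (v : List A) :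
    ∃ (ws : List (List A)) (r : List A), ws.flatten ++ r = v ∧ ¬Q r ∧
      ∀ w ∈ ws, Q w ∧ ∃ w' x, w' ++ [x] = w ∧ ¬Q w' := by
  induction v using List.reverseRecOn with
  | nil => exact ⟨[], [], rfl, hnil, by simp⟩
  | append_singleton v x ih =>
    obtain ⟨ws, r, rfl, hr, hws⟩ := ih
    by_cases hrx : Q (r ++ [x])
    · refine ⟨ws ++ [r ++ [x]], [], by simp, hnil, ?_⟩
      simp only [List.mem_append, List.mem_singleton]
      rintro w (hw | rfl)
      exacts [hws w hw, ⟨hrx, r, x, rfl, hr⟩]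
    · exact ⟨ws, r ++ [x], by simp, hrx, hws⟩

end Factors

section CombiningColours

variable {A S κ : Type} [Semigroup S] {φ : List A → S} {h : ℕ} {us : List (List A)} {τ : ℕ → κ}

theorem forall_not_or_exists_first (P : ℕ → Prop) (a b : ℕ) :
    (∀ x, a < x → x < b → ¬P x) ∨
      ∃ m, a < m ∧ m < b ∧ P m ∧ ∀ x, a < x → x < m → ¬P x := by
  classical
  by_cases hex : ∃ m, a < m ∧ m < b ∧ P m
  · obtain ⟨ham, hmb, hm⟩ := Nat.find_spec hex
    exact .inr ⟨Nat.find hex, ham, hmb, hm, fun x hax hxm hx ↦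
      Nat.find_min hex hxm ⟨hax, hxm.trans hmb, hx⟩⟩
  · push Not at hex
    exact .inl hex

theorem exists_flatten_eq_factor {c : κ} {e : S} {a b : ℕ} (hab : a < b) (ha : τ a = c)
    (htree : ∀ i j, a ≤ i → i < j → j ≤ b → (∀ x, i < x → x < j → τ x ≠ c) →
      HasRamseyanTree φ h (factor us i j))
    (he : ∀ i j, a ≤ i → i < j → j < b → τ i = c → τ j = c → φ (factor us i j) = e) :
    ∃ (vs : List (List A)) (m : ℕ), a ≤ m ∧ m < b ∧ vs.flatten = factor us a m ∧
      (∀ v ∈ vs, HasRamseyanTree φ h v ∧ φ v = e) ∧ HasRamseyanTree φ h (factor us m b) := by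
  induction hd : b - a using Nat.strong_induction_on generalizing a with
  | _ d ih =>
  obtain hno | ⟨a', haa', hab', ha', hno⟩ := forall_not_or_exists_first (τ · = c) a b
  · exact ⟨[], a, le_rfl, hab, (factor_self us a).symm, by simp, htree a b le_rfl hab le_rfl hno⟩
  · obtain ⟨vs, m, ham, hmb, hvs, hv, hlast⟩ := ih (b - a') (by omega) hab' ha'
      (fun i j hi ↦ htree i j (haa'.le.trans hi)) (fun i j hi ↦ he i j (haa'.le.trans hi)) rfl
    refine ⟨factor us a a' :: vs, m, haa'.le.trans ham, hmb, ?_, ?_, hlast⟩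
    · rw [List.flatten_cons, hvs, factor_append haa'.le ham]
    · simp only [List.forall_mem_cons]
      exact ⟨⟨htree a a' le_rfl haa' hab'.le hno, he a a' le_rfl haa' hab' ha ha'⟩, hv⟩

theorem hasRamseyanTree_factor_of_colouring
    (hus : ∀ w ∈ us, HasRamseyanTree φ h w)
    (hτ : ∀ i, 0 < i → i < us.length → ∃ e : S, IsIdempotentElem e ∧
      ∀ j k, 0 < j → j < k → k < us.length → τ j = τ i → τ k = τ i → φ (factor us j k) = e)
    (F : Finset κ) {i j : ℕ} (hij : i < j) (hj : j ≤ us.length)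
    (hF : ∀ x, i < x → x < j → τ x ∈ F) :
    HasRamseyanTree φ (h + 3 * F.card) (factor us i j) := by
  classical
  induction F using Finset.induction_on generalizing i j with
  | empty =>
    obtain rfl : j = i + 1 := by
      by_contra hne
      exact Finset.notMem_empty _ (hF (i + 1) (by omega) (by omega))
    rw [factor_succ hj]
    exact hus _ (List.getElem_mem hj)
  | insert c F hc ih =>
    rw [Finset.card_insert_of_notMem hc]
    have htree (k l : ℕ) (hk : i ≤ k) (hkl : k < l) (hl : l ≤ j)
        (hno : ∀ x, k < x → x < l → τ x ≠ c) :
        HasRamseyanTree φ (h + 3 * F.card) (factor us k l) :=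
      ih hkl (hl.trans hj) fun x hkx hxl ↦
        Finset.mem_of_mem_insert_of_ne (hF x (hk.trans_lt hkx) (hxl.trans_le hl)) (hno x hkx hxl)
    obtain hno | ⟨a, hia, haj, hac, hno⟩ := forall_not_or_exists_first (τ · = c) i j
    · exact (htree i j le_rfl hij le_rfl hno).mono (by omega)
    · obtain ⟨e, he, hφe⟩ := hτ a (by omega) (by omega)
      obtain ⟨vs, m, ham, hmj, hvs, hv, hlast⟩ := exists_flatten_eq_factor haj hac
        (fun k l hk ↦ htree k l (hia.le.trans hk))
        (fun k l hk hkl hl hkc hlc ↦ hφe k l (by omega) hkl (by omega)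
          (hkc.trans hac.symm) (hlc.trans hac.symm))
      have hmiddle : HasRamseyanTree φ (h + 3 * F.card + 1) (factor us a m) := hvs ▸ .flatten he hv
      have hfirst := htree i a le_rfl hia haj.le hno
      rw [← factor_append hia.le haj.le, ← factor_append ham hmj.le]
      exact ((hfirst.mono (Nat.le_add_right _ 2)).append
        (hmiddle.append (hlast.mono (Nat.le_succ _)))).mono (by omega)

end CombiningColours

section ExtendOne

variable {A S : Type*} {φ : List A → S}

/-- The extension of `φ` to the empty word, which is sent to the adjoined identity. -/
def extendOne (φ : List A → S) : List A → WithOne S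
  | [] => 1
  | x :: w => φ (x :: w)

theorem extendOne_of_ne_nil {w : List A} (hw : w ≠ []) : extendOne φ w = φ w := by
  obtain ⟨x, w, rfl⟩ := List.exists_cons_of_ne_nil hw
  rfl

theorem eq_of_extendOne_eq_coe {w : List A} {s : S} (h : extendOne φ w = s) : φ w = s := by
  cases w with
  | nil => exact absurd h.symm WithOne.coe_ne_one
  | cons x w => exact WithOne.coe_injective h

variable [Semigroup S]

theorem JLE.exists_coe_eq {m : WithOne S} {s : S} (h : JLE m s) : ∃ t : S, t = m := by
  refine WithOne.ne_one_iff_exists.1 ?_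
  rintro rfl
  obtain ⟨x, y, h⟩ := h
  induction x using WithOne.recOneCoe <;> induction y using WithOne.recOneCoe <;>
    simp [← WithOne.coe_mul] at h

theorem extendOne_append (hφ : ∀ u v : List A, u ≠ [] → v ≠ [] → φ (u ++ v) = φ u * φ v)
    (v w : List A) : extendOne φ (v ++ w) = extendOne φ v * extendOne φ w := by
  rcases eq_or_ne v [] with rfl | hv
  · simp [extendOne]
  rcases eq_or_ne w [] with rfl | hw
  · simp [extendOne]
  rw [extendOne_of_ne_nil hv, extendOne_of_ne_nil hw, extendOne_of_ne_nil (by simp [hv]),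
    hφ v w hv hw, WithOne.coe_mul]

theorem extendOne_jle_of_infix
    (hφ : ∀ u v : List A, u ≠ [] → v ≠ [] → φ (u ++ v) = φ u * φ v) {v w : List A}
    (h : v <:+: w) : JLE (extendOne φ w) (extendOne φ v) := by
  obtain ⟨x, y, rfl⟩ := h
  exact ⟨extendOne φ x, extendOne φ y, by simp only [extendOne_append hφ]⟩

theorem antisymmRel_extendOne_factor
    (hφ : ∀ u v : List A, u ≠ [] → v ≠ [] → φ (u ++ v) = φ u * φ v) {ws : List (List A)}
    {a : WithOne S} (hws : ∀ w ∈ ws, JLE (extendOne φ w) a) (ha : JLE a (extendOne φ ws.flatten))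
    {i j : ℕ} (hij : i < j) (hj : j ≤ ws.length) :
    AntisymmRel JLE (extendOne φ (factor ws i j)) a := by
  constructor
  · have hi : i < ws.length := hij.trans_le hj
    rw [← factor_append i.le_succ hij, factor_succ hi, extendOne_append hφ]
    exact _root_.trans (mul_jle_left _ _) (hws _ (List.getElem_mem hi))
  · exact _root_.trans ha (extendOne_jle_of_infix hφ (factor_infix_flatten ws i j))

theorem exists_colouring_of_jClass [Finite S]
    (hφ : ∀ u v : List A, u ≠ [] → v ≠ [] → φ (u ++ v) = φ u * φ v) {ws : List (List A)} {a : S}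
    (hlen : 2 ≤ ws.length) (hws : ∀ w ∈ ws, JLE (extendOne φ w) a)
    (ha : JLE (a : WithOne S) (extendOne φ ws.flatten)) :
    ∃ τ : ℕ → WithOne S, ∀ i, 0 < i → i ≤ ws.length → AntisymmRel JLE (τ i) a ∧
      ∃ e : S, IsIdempotentElem e ∧ ∀ j k, 0 < j → j < k → k ≤ ws.length →
        τ j = τ i → τ k = τ i → φ (factor ws j k) = e := by
  have : Finite (WithOne S) := inferInstanceAs (Finite (Option S))
  obtain ⟨τ, hτ⟩ := exists_homogeneous_colouring_s3 (σ := fun i j ↦ extendOne φ (factor ws i j)) hlen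
    (fun i j k hij hjk _ ↦ by rw [← extendOne_append hφ, factor_append hij hjk])
    (fun i j ↦ antisymmRel_extendOne_factor hφ hws ha)
  refine ⟨τ, fun i hi hin ↦ ?_⟩
  obtain ⟨hJ, e, hea, he, hσ⟩ := hτ i hi hin
  obtain ⟨e, rfl⟩ := hea.exists_coe_eq
  exact ⟨hJ, e, WithOne.coe_injective he, fun j k hj hjk hk hji hki ↦
    eq_of_extendOne_eq_coe (hσ j k hj hjk hk hji hki)⟩

end ExtendOne

section MainArgument

variable {A S : Type} [Semigroup S] {φ : List A → S}

theorem hasRamseyanTree_flatten_append [Finite S]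
    (hφ : ∀ u v : List A, u ≠ [] → v ≠ [] → φ (u ++ v) = φ u * φ v) {h : ℕ}
    {ws : List (List A)} {z : List A} {a : S} {J : Finset S}
    (hJ : ∀ s : S, AntisymmRel JLE (s : WithOne S) a → s ∈ J)
    (hne : ws ≠ []) (hws : ∀ w ∈ ws, JLE (extendOne φ w) a)
    (ha : JLE (a : WithOne S) (extendOne φ ws.flatten))
    (htree : ∀ w ∈ ws, HasRamseyanTree φ h w) (hz : HasRamseyanTree φ h z) :
    HasRamseyanTree φ (h + 3 * J.card) (ws.flatten ++ z) := by
  classical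
  obtain hlen | hlen := (Nat.succ_le_of_lt (List.length_pos_iff.2 hne)).eq_or_lt
  · obtain ⟨w, rfl⟩ := List.length_eq_one_iff.1 hlen.symm
    have hJpos : 0 < J.card := Finset.card_pos.2 ⟨a, hJ a (.refl JLE _)⟩
    rw [List.flatten_singleton]
    exact ((htree w (by simp)).append hz).mono (by omega)
  obtain ⟨τ, hτ⟩ := exists_colouring_of_jClass hφ hlen hws ha
  have hmem (x : ℕ) (hx : 0 < x) (hxn : x < ws.length + 1) :
      τ x ∈ J.image ((↑) : S → WithOne S) := by
    obtain ⟨hxJ, -⟩ := hτ x hx (by omega)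
    obtain ⟨s, hs⟩ := hxJ.1.exists_coe_eq
    exact Finset.mem_image.2 ⟨s, hJ s (hs ▸ hxJ), hs⟩
  have hcard := Finset.card_image_of_injective J WithOne.coe_injective
  have hcut : (ws ++ [z]).length = ws.length + 1 := List.length_append
  have key : HasRamseyanTree φ (h + 3 * (J.image ((↑) : S → WithOne S)).card)
      (factor (ws ++ [z]) 0 (ws ++ [z]).length) := by
    refine hasRamseyanTree_factor_of_colouring (τ := τ) ?_ (fun i hi hin ↦ ?_) _ (by simp) le_rfl
      (fun i hi hin ↦ hmem i hi (hcut ▸ hin))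
    · simpa [or_imp, forall_and] using ⟨htree, hz⟩
    · obtain ⟨-, e, he, hφe⟩ := hτ i hi (by omega)
      refine ⟨e, he, fun j k hj hjk hk hji hki ↦ ?_⟩
      rw [factor_append_of_le_length [z] (by omega)]
      exact hφe j k hj hjk (by omega) hji hki
  rwa [factor_zero_length, List.flatten_append, List.flatten_singleton, hcard] at key

theorem hasRamseyanTree_append_singleton_of_jClass [Finite S]
    (hφ : ∀ u v : List A, u ≠ [] → v ≠ [] → φ (u ++ v) = φ u * φ v) {h : ℕ}
    {v : List A} {a : S} {J : Finset S} (hva : AntisymmRel JLE (extendOne φ v) a)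
    (hJ : ∀ s : S, AntisymmRel JLE (s : WithOne S) a → s ∈ J)
    (htree : ∀ w, w <:+: v → ¬JLE (extendOne φ w) a → ∀ y, HasRamseyanTree φ h (w ++ [y])) (x : A) :
    HasRamseyanTree φ (h + 3 * J.card) (v ++ [x]) := by
  obtain ⟨ws, r, rfl, hr, hws⟩ := exists_minimal_blocks (fun w ↦ JLE (extendOne φ w) a)
    (fun h ↦ h.exists_coe_eq.elim fun _ ↦ WithOne.coe_ne_one) v
  have hne : ws ≠ [] := by
    rintro rfl
    exact hr hva.1
  have hws_infix : ws.flatten <:+: ws.flatten ++ r := (List.prefix_append _ r).isInfix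
  rw [List.append_assoc]
  refine hasRamseyanTree_flatten_append hφ hJ hne (fun w hw ↦ (hws w hw).1)
    (_root_.trans hva.2 (extendOne_jle_of_infix hφ hws_infix)) (fun w hw ↦ ?_)
    (htree r (List.suffix_append _ r).isInfix hr x)
  obtain ⟨-, w', y, rfl, hw'⟩ := hws w hw
  have hw_infix : w' ++ [y] <:+: ws.flatten := List.infix_of_mem_flatten hw
  exact htree w' (((List.prefix_append w' [y]).isInfix.trans hw_infix).trans hws_infix) hw' y

theorem hasRamseyanTree_append_singleton [Finite S]
    (hφ : ∀ u v : List A, u ≠ [] → v ≠ [] → φ (u ++ v) = φ u * φ v) (D : Finset S)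
    (v : List A) (x : A) (hD : ∀ s : S, JLE (extendOne φ v) s → s ∈ D) :
    HasRamseyanTree φ (3 * D.card) (v ++ [x]) := by
  classical
  induction D using Finset.strongInduction generalizing v x with
  | H D ih =>
  rcases eq_or_ne v [] with rfl | hv
  · exact .singleton x
  set a := φ v
  have hva : AntisymmRel JLE (extendOne φ v) a := by rw [extendOne_of_ne_nil hv]
  set J := D.filter fun s : S ↦ JLE (s : WithOne S) a
  set N := D.filter fun s : S ↦ ¬JLE (s : WithOne S) a
  have hJN : J.card + N.card = D.card := Finset.card_filter_add_card_filter_not _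
  have hND : N ⊂ D := Finset.filter_ssubset.2 ⟨a, hD a hva.1, not_not.2 (refl _)⟩
  have htree (w : List A) (hw : w <:+: v) (hwa : ¬JLE (extendOne φ w) a) (y : A) :
      HasRamseyanTree φ (3 * N.card) (w ++ [y]) :=
    ih N hND w y fun s hs ↦ Finset.mem_filter.2
      ⟨hD s (_root_.trans (extendOne_jle_of_infix hφ hw) hs), fun hsa ↦ hwa (_root_.trans hs hsa)⟩
  have key := hasRamseyanTree_append_singleton_of_jClass hφ hva (J := J)
    (fun s hs ↦ Finset.mem_filter.2 ⟨hD s (_root_.trans hva.1 hs.2), hs.1⟩) htree x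
  exact key.mono (by omega)

end MainArgument

theorem factorisation_tree_exists {A S : Type} [Semigroup S] [Fintype S]
    (φ : List A → S)
    (hφ : ∀ u v : List A, u ≠ [] → v ≠ [] → φ (u ++ v) = φ u * φ v)
    (u : List A) (hu : u ≠ []) :
    ∃ t : FTree A, t.yield = u ∧ FTree.Ramseyan φ t ∧ t.height ≤ 3 * Fintype.card S := by
  have h := hasRamseyanTree_append_singleton hφ Finset.univ u.dropLast (u.getLast hu)
    fun s _ ↦ Finset.mem_univ s
  rwa [List.dropLast_append_getLast hu, Finset.card_univ] at h
end
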